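/- arXiv:2204.00870 — 3 statements merged into one kernel-verified Lean document; each statement's English description precedes it below -/
import Mathlib

section
/- Let a transition system with states S, total successor relation step, terminal set Term (terminal states only step to themselves), initial set Init, and cost valuation c : S → ℤ be terminating, and let χ : S → ℝ be an anti-potential function for it. Then for every reachable state s and every run ρ from s, the cost of ρ is bounded below by χ(s), i.e. χ(s) ≤ (c(ρ N) − c(s) : ℝ) where N is the first index at which ρ is terminal. (Consequently χ(s) is a lower bound on the minimal cost CostInf(s) of runs from s.) -/
/-- A run of the transition system from state `s`. -/
def IsRun {S : Type*} (step : S → S → Prop) (s : S) (ρ : ℕ → S) : Prop :=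
  ρ 0 = s ∧ ∀ n, step (ρ n) (ρ (n + 1))

/-- `s'` is reachable from `s`. -/
def ReachableFrom {S : Type*} (step : S → S → Prop) (s s' : S) : Prop :=
  ∃ ρ n, IsRun step s ρ ∧ ρ n = s'

/-- `s'` is reachable from some initial state in `Init`. -/
def Reachable {S : Type*} (step : S → S → Prop) (Init : Set S) (s' : S) : Prop :=
  ∃ s ∈ Init, ReachableFrom step s s'

/-- The system is terminating: every run from a reachable state visits a terminal state. -/
def Terminating {S : Type*} (step : S → S → Prop) (Term Init : Set S) : Prop :=
  ∀ s, Reachable step Init s → ∀ ρ, IsRun step s ρ → ∃ n, ρ n ∈ Term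

/-- The cost of a run: `c (ρ N) - c (ρ 0)` where `N` is the least index with `ρ N ∈ Term`. -/
noncomputable def RunCost {S : Type*} (Term : Set S) (c : S → ℤ) (ρ : ℕ → S) : ℤ :=
  c (ρ (sInf {n | ρ n ∈ Term})) - c (ρ 0)

/-- Potential function: sufficiency preservation and sufficiency on termination. -/
def IsPF {S : Type*} (step : S → S → Prop) (Term Init : Set S) (c : S → ℤ)
    (φ : S → ℝ) : Prop :=
  (∀ s s', Reachable step Init s → step s s' →
    φ s ≥ φ s' + ((c s' : ℝ) - (c s : ℝ))) ∧
  (∀ s, Reachable step Init s → s ∈ Term → φ s ≥ 0)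

/-- Anti-potential function: insufficiency preservation and insufficiency on termination. -/
def IsAntiPF {S : Type*} (step : S → S → Prop) (Term Init : Set S) (c : S → ℤ)
    (χ : S → ℝ) : Prop :=
  (∀ s s', Reachable step Init s → step s s' →
    χ s ≤ χ s' + ((c s' : ℝ) - (c s : ℝ))) ∧
  (∀ s, Reachable step Init s → s ∈ Term → χ s ≤ 0)

section

variable {S : Type*} {step : S → S → Prop} {Term Init : Set S} {c : S → ℤ} {χ : S → ℝ}
  {s t u : S} {ρ : ℕ → S}

theorem IsRun.cons (hst : step s t) (hρ : IsRun step t ρ) :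
    IsRun step s (fun | 0 => s | n + 1 => ρ n) :=
  ⟨rfl, fun
    | 0 => by simpa only [hρ.1] using hst
    | n + 1 => hρ.2 n⟩

theorem IsRun.reachableFrom (hρ : IsRun step s ρ) (n : ℕ) : ReachableFrom step s (ρ n) :=
  ⟨ρ, n, hρ, rfl⟩

theorem ReachableFrom.head (hst : step s t) (htu : ReachableFrom step t u) :
    ReachableFrom step s u := by
  obtain ⟨ρ, n, hρ, rfl⟩ := htu
  exact (hρ.cons hst).reachableFrom (n + 1)

theorem ReachableFrom.trans (hst : ReachableFrom step s t) (htu : ReachableFrom step t u) :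
    ReachableFrom step s u := by
  obtain ⟨ρ, n, hρ, rfl⟩ := hst
  -- Runs are infinite, so the steps leading to `t` are prepended to a run from `t`, last one first.
  induction n with
  | zero => rwa [hρ.1] at htu
  | succ n ih => exact ih (htu.head (hρ.2 n))

theorem Reachable.trans (hs : Reachable step Init s) (hst : ReachableFrom step s t) :
    Reachable step Init t := by
  obtain ⟨i, hi, his⟩ := hs
  exact ⟨i, hi, his.trans hst⟩

theorem IsAntiPF.monotone_add_cost (hχ : IsAntiPF step Term Init c χ)
    (hs : Reachable step Init s) (hρ : IsRun step s ρ) :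
    Monotone fun n ↦ χ (ρ n) + c (ρ n) := by
  refine monotone_nat_of_le_succ fun n ↦ ?_
  have hstep := hχ.1 _ _ (hs.trans (hρ.reachableFrom n)) (hρ.2 n)
  linarith

theorem antipotential_lower_bounds_cost_general (hχ : IsAntiPF step Term Init c χ)
    (hs : Reachable step Init s) (hρ : IsRun step s ρ) {n : ℕ} (hn : ρ n ∈ Term) :
    χ s ≤ (c (ρ n) : ℝ) - c s := by
  have hmono : χ (ρ 0) + c (ρ 0) ≤ χ (ρ n) + c (ρ n) := hχ.monotone_add_cost hs hρ n.zero_le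
  have hterm : χ (ρ n) ≤ 0 := hχ.2 _ (hs.trans (hρ.reachableFrom n)) hn
  rw [hρ.1] at hmono
  linarith

end

/-- an anti-potential function lower-bounds the cost of every run from a
reachable state in a terminating transition system. -/
theorem antipotential_lower_bounds_cost {S : Type*}
    (step : S → S → Prop) (Term Init : Set S) (c : S → ℤ)
    (htotal : ∀ s : S, ∃ s', step s s')
    (hTerm : ∀ s ∈ Term, ∀ s', step s s' → s' = s)
    (hterminating : Terminating step Term Init)
    (χ : S → ℝ) (hχ : IsAntiPF step Term Init c χ)
    (s : S) (hs : Reachable step Init s)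
    (ρ : ℕ → S) (hρ : IsRun step s ρ)
    (N : ℕ) (hN : ρ N ∈ Term) (hNmin : ∀ m < N, ρ m ∉ Term) :
    χ s ≤ ((c (ρ N) : ℝ) - (c s : ℝ)) :=
  antipotential_lower_bounds_cost_general hχ hs hρ hN
end

section
/- Let a transition system with states S, total successor relation step, terminal set Term (terminal states only step to themselves), initial set Init, and cost valuation c : S → ℤ be terminating, and assume that for every reachable state s the set of costs {Cost(ρ) : ρ a run from s} is bounded below. Then the function X : S → ℝ defined on each state s by X(s) = sInf {(Cost(ρ) : ℝ) : ρ a run from s} is an anti-potential function: it satisfies the insufficiency preservation condition at every reachable state and its successors, and it is nonpositive at every reachable terminal state. -/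
/-!
Prepending a nonterminal state `s` to a run from a successor `s'` gives a run from `s` whose cost
is larger by exactly `c s' - c s`. Hence the costs from `s'`, shifted by that amount, are among the
costs from `s`, and the infimum over the larger set is smaller. From a terminal state the only cost
is `0`, and the only step leads back to that state.
-/

section Runs

variable {S : Type*} {step : S → S → Prop} {Term : Set S} {s s' : S} {ρ : ℕ → S}

theorem exists_isRun (htotal : ∀ s : S, ∃ s', step s s') (s : S) :
    ∃ ρ : ℕ → S, IsRun step s ρ := by
  choose next hnext using htotal
  refine ⟨fun n => next^[n] s, rfl, fun n => ?_⟩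
  simpa only [Function.iterate_succ_apply'] using hnext (next^[n] s)

/-- The sequence `ρ` delayed by one step, with `s` prepended: it turns runs from a successor of `s`
into runs from `s`. -/
def consRun (s : S) (ρ : ℕ → S) : ℕ → S
  | 0 => s
  | n + 1 => ρ n

theorem IsRun.consRun (hρ : IsRun step s' ρ) (hstep : step s s') :
    IsRun step s (consRun s ρ) := by
  obtain ⟨rfl, hsteps⟩ := hρ
  refine ⟨rfl, fun n => ?_⟩
  cases n with
  | zero => exact hstep
  | succ n => exact hsteps n

theorem sInf_setOf_consRun_mem (hs : s ∉ Term) (hρ : ∃ n, consRun s ρ n ∈ Term) :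
    sInf {n | consRun s ρ n ∈ Term} = sInf {n | ρ n ∈ Term} + 1 := by
  have hpos : 1 ≤ sInf {n | consRun s ρ n ∈ Term} := by
    refine le_csInf hρ fun n hn => Nat.one_le_iff_ne_zero.2 ?_
    rintro rfl
    exact hs hn
  exact (Nat.sInf_add hpos).symm

theorem runCost_consRun (c : S → ℤ) (hs : s ∉ Term) (hρ : ∃ n, consRun s ρ n ∈ Term) :
    RunCost Term c (consRun s ρ) = RunCost Term c ρ + (c (ρ 0) - c s) := by
  rw [RunCost, sInf_setOf_consRun_mem hs hρ, RunCost]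
  simp only [consRun]
  ring

theorem runCost_eq_zero_of_mem (c : S → ℤ) (h : ρ 0 ∈ Term) : RunCost Term c ρ = 0 := by
  rw [RunCost, Nat.sInf_eq_zero.2 (Or.inl h), sub_self]

end Runs

section RunCosts

variable {S : Type*} {step : S → S → Prop} {Term : Set S} {c : S → ℤ} {s s' : S}

/-- The set of costs of the runs from `s`, in `ℝ` so that its infimum can be compared with
anti-potential functions. -/
def runCosts (step : S → S → Prop) (Term : Set S) (c : S → ℤ) (s : S) : Set ℝ :=
  {x | ∃ ρ : ℕ → S, IsRun step s ρ ∧ x = (RunCost Term c ρ : ℝ)}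

theorem runCosts_nonempty (htotal : ∀ s : S, ∃ s', step s s') (s : S) :
    (runCosts step Term c s).Nonempty := by
  obtain ⟨ρ, hρ⟩ := exists_isRun htotal s
  exact ⟨_, ρ, hρ, rfl⟩

theorem runCosts_eq_singleton_of_mem (htotal : ∀ s : S, ∃ s', step s s') (hs : s ∈ Term) :
    runCosts step Term c s = {0} := by
  refine (runCosts_nonempty htotal s).subset_singleton_iff.1 ?_
  rintro _ ⟨ρ, ⟨rfl, -⟩, rfl⟩
  rw [Set.mem_singleton_iff, runCost_eq_zero_of_mem c hs, Int.cast_zero]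

theorem sInf_runCosts_eq_zero_of_mem (htotal : ∀ s : S, ∃ s', step s s') (hs : s ∈ Term) :
    sInf (runCosts step Term c s) = 0 := by
  rw [runCosts_eq_singleton_of_mem htotal hs, csInf_singleton]

theorem add_sub_mem_runCosts (hs : s ∉ Term) (hvisit : ∀ ρ, IsRun step s ρ → ∃ n, ρ n ∈ Term)
    (hstep : step s s') {x : ℝ} (hx : x ∈ runCosts step Term c s') :
    x + ((c s' : ℝ) - (c s : ℝ)) ∈ runCosts step Term c s := by
  obtain ⟨ρ, hρ, rfl⟩ := hx
  have hrun : IsRun step s (consRun s ρ) := hρ.consRun hstep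
  refine ⟨consRun s ρ, hrun, ?_⟩
  rw [runCost_consRun c hs (hvisit _ hrun), hρ.1]
  norm_cast

theorem sInf_runCosts_le_add_of_step (hs : s ∉ Term)
    (hvisit : ∀ ρ, IsRun step s ρ → ∃ n, ρ n ∈ Term)
    (hbdd : BddBelow (runCosts step Term c s)) (hne : (runCosts step Term c s').Nonempty)
    (hstep : step s s') :
    sInf (runCosts step Term c s) ≤
      sInf (runCosts step Term c s') + ((c s' : ℝ) - (c s : ℝ)) := by
  rw [← sub_le_iff_le_add]
  refine le_csInf hne fun x hx => ?_
  rw [sub_le_iff_le_add]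
  exact csInf_le hbdd (add_sub_mem_runCosts hs hvisit hstep hx)

end RunCosts

/-- the pointwise infimum of run costs is an anti-potential function. -/
theorem costInf_is_antipotential {S : Type*}
    (step : S → S → Prop) (Term Init : Set S) (c : S → ℤ)
    (htotal : ∀ s : S, ∃ s', step s s')
    (hTerm : ∀ s ∈ Term, ∀ s', step s s' → s' = s)
    (hterminating : Terminating step Term Init)
    (hbdd : ∀ s, Reachable step Init s →
      BddBelow {x : ℝ | ∃ ρ : ℕ → S, IsRun step s ρ ∧ x = (RunCost Term c ρ : ℝ)}) :
    IsAntiPF step Term Init c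
      (fun s => sInf {x : ℝ | ∃ ρ : ℕ → S, IsRun step s ρ ∧ x = (RunCost Term c ρ : ℝ)}) := by
  change IsAntiPF step Term Init c fun s => sInf (runCosts step Term c s)
  refine ⟨fun s s' hreach hstep => ?_, fun s _ hs => ?_⟩
  · by_cases hs : s ∈ Term
    · obtain rfl : s' = s := hTerm s hs s' hstep
      rw [sub_self, add_zero]
    · exact sInf_runCosts_le_add_of_step hs (hterminating s hreach) (hbdd s hreach)
        (runCosts_nonempty htotal s') hstep
  · exact (sInf_runCosts_eq_zero_of_mem htotal hs).le
end

section
/- Let T_new and T_old be two terminating transition systems sharing an input type X, input set Θ₀, and initial-state maps ι_new, ι_old. Suppose φ_new is a potential function for T_new (with reachability taken from the initial states {ι_new x : x ∈ Θ₀}) and χ_old is an anti-potential function for T_old (with reachability from {ι_old x : x ∈ Θ₀}). Then for every input x ∈ Θ₀, every run ρ_new from ι_new x in T_new and every run ρ_old from ι_old x in T_old, Cost(ρ_new) − Cost(ρ_old) ≤ φ_new(ι_new x) − χ_old(ι_old x). -/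
/-- `t` is a threshold for the DiffCost problem. -/
noncomputable def IsThreshold {Sn So X : Type*}
    (stepN : Sn → Sn → Prop) (TermN : Set Sn) (cN : Sn → ℤ)
    (stepO : So → So → Prop) (TermO : Set So) (cO : So → ℤ)
    (Θ₀ : Set X) (ιN : X → Sn) (ιO : X → So) (t : ℝ) : Prop :=
  ∀ x ∈ Θ₀, ∀ ρN : ℕ → Sn, IsRun stepN (ιN x) ρN →
    ∀ ρO : ℕ → So, IsRun stepO (ιO x) ρO →
      ((RunCost TermN cN ρN : ℝ) - (RunCost TermO cO ρO : ℝ)) ≤ t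

/-! Along a run, a potential function plus the cost valuation never increases. Comparing the start
of the run with its first terminal state, where the potential is nonnegative, bounds the cost of the
run by the initial potential. Negating both the valuation and the function turns an anti-potential
function into a potential function, which gives the dual lower bound; the two bounds subtract. -/

section SingleSystem

variable {S : Type*} {step : S → S → Prop} {Term Init : Set S} {c : S → ℤ} {s : S} {ρ : ℕ → S}

theorem IsRun.reachable (hρ : IsRun step s ρ) (hs : s ∈ Init) (n : ℕ) :
    Reachable step Init (ρ n) :=
  ⟨s, hs, ρ, n, hρ, rfl⟩

theorem Terminating.exists_mem_term (hterm : Terminating step Term Init) (hs : s ∈ Init)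
    (hρ : IsRun step s ρ) : ∃ n, ρ n ∈ Term :=
  hterm s ⟨s, hs, ρ, 0, hρ, hρ.1⟩ ρ hρ

theorem IsPF.antitone_add_cost {φ : S → ℝ} (hφ : IsPF step Term Init c φ) (hs : s ∈ Init)
    (hρ : IsRun step s ρ) : Antitone fun n => φ (ρ n) + (c (ρ n) : ℝ) := by
  refine antitone_nat_of_succ_le fun n => ?_
  have hstep := hφ.1 _ _ (hρ.reachable hs n) (hρ.2 n)
  linarith

theorem IsPF.runCost_le {φ : S → ℝ} (hφ : IsPF step Term Init c φ) (hs : s ∈ Init)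
    (hρ : IsRun step s ρ) (hhalt : ∃ n, ρ n ∈ Term) : (RunCost Term c ρ : ℝ) ≤ φ s := by
  obtain rfl := hρ.1
  let N := sInf {n | ρ n ∈ Term}
  have hterminal : ρ N ∈ Term := Nat.sInf_mem hhalt
  have hnonneg : 0 ≤ φ (ρ N) := hφ.2 _ (hρ.reachable hs N) hterminal
  calc (RunCost Term c ρ : ℝ) = c (ρ N) - c (ρ 0) := Int.cast_sub _ _
    _ ≤ φ (ρ N) + c (ρ N) - c (ρ 0) := by linarith
    _ ≤ φ (ρ 0) := sub_le_iff_le_add.2 (hφ.antitone_add_cost hs hρ N.zero_le)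

theorem IsAntiPF.neg {χ : S → ℝ} (hχ : IsAntiPF step Term Init c χ) :
    IsPF step Term Init (-c) (-χ) := by
  refine ⟨fun s s' hs hstep => ?_, fun s hs hterminal => neg_nonneg.2 (hχ.2 s hs hterminal)⟩
  have hle := hχ.1 s s' hs hstep
  simp only [Pi.neg_apply, Int.cast_neg]
  linarith

theorem runCost_neg (Term : Set S) (c : S → ℤ) (ρ : ℕ → S) :
    RunCost Term (-c) ρ = -RunCost Term c ρ := by
  simp only [RunCost, Pi.neg_apply]
  ring

theorem IsAntiPF.le_runCost {χ : S → ℝ} (hχ : IsAntiPF step Term Init c χ) (hs : s ∈ Init)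
    (hρ : IsRun step s ρ) (hhalt : ∃ n, ρ n ∈ Term) : χ s ≤ (RunCost Term c ρ : ℝ) := by
  have hneg : ((RunCost Term (-c) ρ : ℤ) : ℝ) ≤ -χ s := hχ.neg.runCost_le hs hρ hhalt
  rw [runCost_neg, Int.cast_neg] at hneg
  exact neg_le_neg_iff.1 hneg

end SingleSystem

theorem pf_antipf_bound_diffcost_general {Sn So : Type*}
    {stepN : Sn → Sn → Prop} {TermN InitN : Set Sn} {cN : Sn → ℤ}
    {stepO : So → So → Prop} {TermO InitO : Set So} {cO : So → ℤ}
    {φN : Sn → ℝ} (hφN : IsPF stepN TermN InitN cN φN)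
    {χO : So → ℝ} (hχO : IsAntiPF stepO TermO InitO cO χO)
    {sN : Sn} (hsN : sN ∈ InitN) {sO : So} (hsO : sO ∈ InitO)
    {ρN : ℕ → Sn} (hρN : IsRun stepN sN ρN) (hhaltN : ∃ n, ρN n ∈ TermN)
    {ρO : ℕ → So} (hρO : IsRun stepO sO ρO) (hhaltO : ∃ n, ρO n ∈ TermO) :
    (RunCost TermN cN ρN : ℝ) - (RunCost TermO cO ρO : ℝ) ≤ φN sN - χO sO :=
  sub_le_sub (hφN.runCost_le hsN hρN hhaltN) (hχO.le_runCost hsO hρO hhaltO)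

/-- a PF for the new system and an anti-PF for the old system bound the
difference in cost between the two systems on any shared input. -/
theorem pf_antipf_bound_diffcost {Sn So X : Type*}
    (stepN : Sn → Sn → Prop) (TermN : Set Sn) (cN : Sn → ℤ)
    (stepO : So → So → Prop) (TermO : Set So) (cO : So → ℤ)
    (Θ₀ : Set X) (ιN : X → Sn) (ιO : X → So)
    (htotalN : ∀ s : Sn, ∃ s', stepN s s')
    (htotalO : ∀ s : So, ∃ s', stepO s s')
    (hTermN : ∀ s ∈ TermN, ∀ s', stepN s s' → s' = s)
    (hTermO : ∀ s ∈ TermO, ∀ s', stepO s s' → s' = s)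
    (hterminatingN : Terminating stepN TermN (ιN '' Θ₀))
    (hterminatingO : Terminating stepO TermO (ιO '' Θ₀))
    (φN : Sn → ℝ) (hφN : IsPF stepN TermN (ιN '' Θ₀) cN φN)
    (χO : So → ℝ) (hχO : IsAntiPF stepO TermO (ιO '' Θ₀) cO χO)
    (x : X) (hx : x ∈ Θ₀)
    (ρN : ℕ → Sn) (hρN : IsRun stepN (ιN x) ρN)
    (ρO : ℕ → So) (hρO : IsRun stepO (ιO x) ρO) :
    ((RunCost TermN cN ρN : ℝ) - (RunCost TermO cO ρO : ℝ)) ≤ φN (ιN x) - χO (ιO x) := by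
  have hN := Set.mem_image_of_mem ιN hx
  have hO := Set.mem_image_of_mem ιO hx
  exact pf_antipf_bound_diffcost_general hφN hχO hN hO hρN (hterminatingN.exists_mem_term hN hρN)
    hρO (hterminatingO.exists_mem_term hO hρO)
end
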